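/- Let $W_x, W_y > 0$ and let $p, q$ be two independent random points, each uniformly distributed on the rectangle $[0,W_x] \times [0,W_y] \subseteq \mathbb{R}^2$. Then for every $r \ge 0$ with $2r \le \min(W_x, W_y)$, the collision probability satisfies $\mathbb{P}(\|p - q\| \le r) \ge \pi r^2 (W_x - 2r)(W_y - 2r) / (W_x W_y)^2$. -/

import Mathlib

open MeasureTheory Real
open scoped ProbabilityTheory

/-! Conditioning on `p = x`, the collision probability is the average over `x` of the probability
that `q` lies in the disk of radius `r` around `x`. Averaging only over the `x` whose disk stays
inside the aperture, every such disk has the same probability, namely its area divided by the area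
of the aperture; the points lost are those within `r` of the boundary. -/

lemma map_apply_eq_div_of_isUniform {Ω E : Type*} {mΩ : MeasurableSpace Ω} {P : Measure Ω}
    [MeasurableSpace E] {X : Ω → E} {μ : Measure E} {R A : Set E}
    (hX : pdf.IsUniform X R P μ) (hA : MeasurableSet A) (hAR : A ⊆ R) :
    P.map X A = μ A / μ R := by
  rw [hX, ProbabilityTheory.cond_apply' hA, Set.inter_eq_right.2 hAR, ENNReal.div_eq_inv_mul]

section Collision

variable {Ω E : Type*} {mΩ : MeasurableSpace Ω} {P : Measure Ω} [IsFiniteMeasure P]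
  [MeasurableSpace E] {X Y : Ω → E}

lemma measure_dist_le_eq_lintegral_closedBall [PseudoMetricSpace E] [OpensMeasurableSpace E]
    [SecondCountableTopology E] (hX : AEMeasurable X P) (hY : AEMeasurable Y P)
    (hXY : ProbabilityTheory.IndepFun X Y P) (r : ℝ) :
    P {ω | dist (X ω) (Y ω) ≤ r} = ∫⁻ x, P.map Y (Metric.closedBall x r) ∂P.map X := by
  have hS : MeasurableSet {z : E × E | dist z.1 z.2 ≤ r} :=
    measurableSet_le (measurable_fst.dist measurable_snd) measurable_const
  calc P {ω | dist (X ω) (Y ω) ≤ r}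
      = P.map (fun ω ↦ (X ω, Y ω)) {z | dist z.1 z.2 ≤ r} :=
        (Measure.map_apply_of_aemeasurable (hX.prodMk hY) hS).symm
    _ = (P.map X).prod (P.map Y) {z | dist z.1 z.2 ≤ r} := by
        rw [(ProbabilityTheory.indepFun_iff_map_prod_eq_prod_map_map hX hY).1 hXY]
    _ = ∫⁻ x, P.map Y (Metric.closedBall x r) ∂P.map X := by
        simp only [Measure.prod_apply hS, Set.preimage_ofPred_eq, dist_comm, Metric.closedBall]

lemma mul_map_apply_le_measure_dist_le [PseudoMetricSpace E] [OpensMeasurableSpace E]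
    [SecondCountableTopology E] (hX : AEMeasurable X P) (hY : AEMeasurable Y P)
    (hXY : ProbabilityTheory.IndepFun X Y P) {I : Set E} (hI : MeasurableSet I) {c : ENNReal}
    {r : ℝ} (hc : ∀ x ∈ I, c ≤ P.map Y (Metric.closedBall x r)) :
    c * P.map X I ≤ P {ω | dist (X ω) (Y ω) ≤ r} := by
  calc c * P.map X I
      = ∫⁻ _ in I, c ∂P.map X := (setLIntegral_const I c).symm
    _ ≤ ∫⁻ x in I, P.map Y (Metric.closedBall x r) ∂P.map X := setLIntegral_mono' hI hc
    _ ≤ ∫⁻ x, P.map Y (Metric.closedBall x r) ∂P.map X := setLIntegral_le_lintegral _ _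
    _ = P {ω | dist (X ω) (Y ω) ≤ r} :=
        (measure_dist_le_eq_lintegral_closedBall hX hY hXY r).symm

lemma measure_closedBall_mul_div_sq_le_measure_norm_sub_le [NormedAddCommGroup E] [BorelSpace E]
    [SecondCountableTopology E] {μ : Measure E} [μ.IsAddHaarMeasure] {R I : Set E} {r : ℝ}
    (hX : AEMeasurable X P) (hY : AEMeasurable Y P) (hXY : ProbabilityTheory.IndepFun X Y P)
    (hXR : pdf.IsUniform X R P μ) (hYR : pdf.IsUniform Y R P μ) (hr : 0 ≤ r)
    (hI : MeasurableSet I) (hIR : ∀ x ∈ I, Metric.closedBall x r ⊆ R) :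
    μ (Metric.closedBall 0 r) * μ I / μ R ^ 2 ≤ P {ω | ‖X ω - Y ω‖ ≤ r} := by
  have hI_subset : I ⊆ R := fun x hx ↦ hIR x hx (Metric.mem_closedBall_self hr)
  have map_closedBall : ∀ x ∈ I,
      P.map Y (Metric.closedBall x r) = μ (Metric.closedBall 0 r) / μ R := fun x hx ↦ by
    rw [map_apply_eq_div_of_isUniform hYR measurableSet_closedBall (hIR x hx),
      Measure.addHaar_closedBall_center]
  calc μ (Metric.closedBall 0 r) * μ I / μ R ^ 2
      = μ (Metric.closedBall 0 r) / μ R * P.map X I := by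
        simp only [map_apply_eq_div_of_isUniform hXR hI hI_subset, div_eq_mul_inv,
          ENNReal.inv_pow]
        ring
    _ ≤ P {ω | dist (X ω) (Y ω) ≤ r} :=
        mul_map_apply_le_measure_dist_le hX hY hXY hI fun x hx ↦ (map_closedBall x hx).ge
    _ = P {ω | ‖X ω - Y ω‖ ≤ r} := by simp only [dist_eq_norm]

end Collision

section EuclideanBox

variable {ι : Type*}

/-- The closed axis-parallel box `∏ i, [a i, b i]`, as a subset of Euclidean space and not of
`ι → ℝ`, whose balls are cubes. The aperture and its interior sub-region are such boxes. -/
def euclideanBox (a b : ι → ℝ) : Set (EuclideanSpace ℝ ι) :=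
  {x | ∀ i, x i ∈ Set.Icc (a i) (b i)}

lemma euclideanBox_eq_preimage_Icc (a b : ι → ℝ) :
    euclideanBox a b = WithLp.ofLp ⁻¹' Set.Icc a b := by
  ext x
  simp only [euclideanBox, Set.mem_ofPred_eq, Set.mem_preimage, Set.mem_Icc, Pi.le_def, forall_and]

lemma measurableSet_euclideanBox [Countable ι] (a b : ι → ℝ) :
    MeasurableSet (euclideanBox a b) := by
  rw [euclideanBox_eq_preimage_Icc]
  exact WithLp.measurable_ofLp 2 (ι → ℝ) measurableSet_Icc

variable [Fintype ι]

lemma volume_euclideanBox (a b : ι → ℝ) :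
    volume (euclideanBox a b) = ∏ i, ENNReal.ofReal (b i - a i) := by
  rw [euclideanBox_eq_preimage_Icc, (PiLp.volume_preserving_ofLp ι).measure_preimage
    measurableSet_Icc.nullMeasurableSet, Real.volume_Icc_pi]

lemma closedBall_subset_euclideanBox {a b : ι → ℝ} {r : ℝ} {x : EuclideanSpace ℝ ι}
    (hx : x ∈ euclideanBox (fun i ↦ a i + r) (fun i ↦ b i - r)) :
    Metric.closedBall x r ⊆ euclideanBox a b := by
  intro y hy i
  have hyx : |y i - x i| ≤ r := (PiLp.norm_apply_le (y - x) i).trans (mem_closedBall_iff_norm.1 hy)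
  obtain ⟨hlower, hupper⟩ := abs_le.1 hyx
  obtain ⟨ha, hb⟩ := hx i
  constructor <;> linarith

/-- `ENNReal.ofReal` makes the bound vanish once some side of the box is shorter than `2 * r`. -/
theorem collision_probability_lower_bound_general {Ω : Type*} {mΩ : MeasurableSpace Ω}
    {P : Measure Ω} [IsFiniteMeasure P] {a b : ι → ℝ} {p q : Ω → EuclideanSpace ℝ ι}
    (hp : AEMeasurable p P) (hq : AEMeasurable q P) (hpq : ProbabilityTheory.IndepFun p q P)
    (hp_unif : pdf.IsUniform p (euclideanBox a b) P volume)
    (hq_unif : pdf.IsUniform q (euclideanBox a b) P volume) {r : ℝ} (hr : 0 ≤ r) :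
    volume (Metric.closedBall (0 : EuclideanSpace ℝ ι) r)
        * (∏ i, ENNReal.ofReal (b i - a i - 2 * r)) / (∏ i, ENNReal.ofReal (b i - a i)) ^ 2
      ≤ P {ω | ‖p ω - q ω‖ ≤ r} := by
  have volume_interior : volume (euclideanBox (fun i ↦ a i + r) (fun i ↦ b i - r))
      = ∏ i, ENNReal.ofReal (b i - a i - 2 * r) := by
    rw [volume_euclideanBox]
    congr! 2
    ring
  rw [← volume_interior, ← volume_euclideanBox]
  exact measure_closedBall_mul_div_sq_le_measure_norm_sub_le hp hq hpq hp_unif hq_unif hr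
    (measurableSet_euclideanBox _ _) fun _ ↦ closedBall_subset_euclideanBox

end EuclideanBox

lemma volume_closedBall_fin_two_eq_ofReal (x : EuclideanSpace ℝ (Fin 2)) {r : ℝ} (hr : 0 ≤ r) :
    volume (Metric.closedBall x r) = ENNReal.ofReal (π * r ^ 2) := by
  rw [EuclideanSpace.volume_closedBall_fin_two, mul_comm, ENNReal.ofReal_mul pi_nonneg,
    ENNReal.ofReal_pow hr, ← NNReal.coe_real_pi, ENNReal.ofReal_coe_nnreal]

/-- For two independent points `p, q`, each uniformly distributed on the
rectangle `[0,Wx] × [0,Wy] ⊆ ℝ²` (with Euclidean norm), for every `r ≥ 0` with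
`2r ≤ min(Wx, Wy)`, the collision probability satisfies
`ℙ(‖p - q‖ ≤ r) ≥ π r² (Wx - 2r)(Wy - 2r) / (Wx Wy)²`. -/
theorem collision_probability_lower_bound
    (Wx Wy : ℝ) (hWx : 0 < Wx) (hWy : 0 < Wy)
    {Ω : Type*} [MeasureSpace Ω] [IsProbabilityMeasure (ℙ : Measure Ω)]
    (p q : Ω → EuclideanSpace ℝ (Fin 2))
    (hp : Measurable p) (hq : Measurable q)
    (hindep : ProbabilityTheory.IndepFun p q ℙ)
    (R : Set (EuclideanSpace ℝ (Fin 2)))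
    (hR : R = {x : EuclideanSpace ℝ (Fin 2) | x 0 ∈ Set.Icc 0 Wx ∧ x 1 ∈ Set.Icc 0 Wy})
    (hlawp : Measure.map p ℙ = (volume R)⁻¹ • volume.restrict R)
    (hlawq : Measure.map q ℙ = (volume R)⁻¹ • volume.restrict R)
    (r : ℝ) (hr : 0 ≤ r) (hr2 : 2 * r ≤ min Wx Wy) :
    ENNReal.ofReal (π * r ^ 2 * (Wx - 2 * r) * (Wy - 2 * r) / (Wx * Wy) ^ 2)
      ≤ ℙ {ω | ‖p ω - q ω‖ ≤ r} := by
  have hbox : R = euclideanBox 0 ![Wx, Wy] := by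
    simp [hR, euclideanBox, Fin.forall_fin_two]
  have hrx : 0 ≤ Wx - 2 * r := sub_nonneg.2 (hr2.trans (min_le_left _ _))
  subst hbox
  have hbound := collision_probability_lower_bound_general hp.aemeasurable hq.aemeasurable hindep
    hlawp hlawq hr
  simp only [Fin.prod_univ_two, Pi.zero_apply, Matrix.cons_val_zero, Matrix.cons_val_one, sub_zero,
    volume_closedBall_fin_two_eq_ofReal _ hr] at hbound
  rwa [ENNReal.ofReal_div_of_pos (by positivity), ENNReal.ofReal_mul (by positivity),
    ENNReal.ofReal_mul (by positivity), ENNReal.ofReal_pow (by positivity),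
    ENNReal.ofReal_mul hWx.le, mul_assoc]
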